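/- arXiv:1010.4905 — 8 statements merged into one kernel-verified Lean document; each statement's English description precedes it below -/
import Mathlib

section
/- Let f be a real-valued harmonic function on the open unit disk U = {z ∈ ℂ : |z| < 1} with values in the open interval (-1, 1). Then for every z ∈ U, the gradient of f satisfies the sharp inequality |∇f(z)| ≤ (4/π) · (1 - f(z)²)/(1 - |z|²). -/
open Complex Metric Real

lemma aux_sin_lt_cos (a b : ℂ) (him : a.im = b.im)
    (h : 0 < Real.cos (2 * a.re) + Real.cos (2 * b.re)) :
    ‖Complex.sin a‖ < ‖Complex.cos b‖ := by
  have h1 : ‖Complex.sin a‖ ^ 2 < ‖Complex.cos b‖ ^ 2 := by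
    have e1 : Complex.sin a = ⟨Real.sin a.re * Real.cosh a.im, Real.cos a.re * Real.sinh a.im⟩ := by
      rw [Complex.sin_eq, Complex.mk_eq_add_mul_I]; push_cast; ring
    have e2 : Complex.cos b =
        ⟨Real.cos b.re * Real.cosh b.im, -(Real.sin b.re * Real.sinh b.im)⟩ := by
      rw [Complex.cos_eq, Complex.mk_eq_add_mul_I]; push_cast; ring
    rw [e1, e2, ← Complex.normSq_eq_norm_sq, ← Complex.normSq_eq_norm_sq, Complex.normSq_mk,
      Complex.normSq_mk, him]
    rw [Real.cos_two_mul, Real.cos_two_mul] at h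
    have s1 := Real.sin_sq_add_cos_sq a.re
    have s2 := Real.sin_sq_add_cos_sq b.re
    have s3 := Real.cosh_sq b.im
    have k1 : Real.sin a.re ^ 2 = 1 - Real.cos a.re ^ 2 := by linarith
    have k2 : Real.sin b.re ^ 2 = 1 - Real.cos b.re ^ 2 := by linarith
    ring_nf
    rw [k1, k2, s3]
    ring_nf at h ⊢
    linarith
  exact lt_of_pow_lt_pow_left₀ 2 (norm_nonneg _) h1

lemma aux_cos_le (t : ℝ) (h : |t| ≤ 1) : Real.cos (π / 2 * t) ≤ 1 - t ^ 2 := by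
  wlog ht : 0 ≤ t with H
  · have := H (-t) (by simpa using h) (by linarith)
    simpa using this
  rw [abs_of_nonneg ht] at h
  have m0 : (0 : ℝ) ∈ Set.Icc 0 π := ⟨le_rfl, Real.pi_pos.le⟩
  have m1 : π / 4 ∈ Set.Icc 0 π := ⟨by positivity, by linarith [Real.pi_pos]⟩
  have h1t : 0 ≤ 1 - t := by linarith
  have hc := strictConcaveOn_sin_Icc.concaveOn.2 m0 m1 h1t ht (by ring)
  simp only [smul_eq_mul, Real.sin_zero, mul_zero, zero_add, Real.sin_pi_div_four] at hc
  have e : Real.cos (π / 2 * t) = 1 - 2 * Real.sin (t * (π / 4)) ^ 2 := by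
    rw [show π / 2 * t = 2 * (t * (π / 4)) by ring, Real.cos_two_mul, Real.cos_sq']; ring
  rw [e]
  have h2 : (t * (√2 / 2)) ^ 2 ≤ Real.sin (t * (π / 4)) ^ 2 := pow_le_pow_left₀ (by positivity) hc 2
  have h3 : (√2 : ℝ) ^ 2 = 2 := Real.sq_sqrt (by norm_num)
  have h4 : (t * (√2 / 2)) ^ 2 = t ^ 2 / 2 := by
    rw [mul_pow, div_pow, h3]; ring
  linarith

lemma aux_cos_pos (t : ℝ) (h : t ∈ Set.Ioo (-1 : ℝ) 1) : 0 < Real.cos (π / 2 * t) := by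
  apply Real.cos_pos_of_mem_Ioo
  constructor <;> nlinarith [h.1, h.2, Real.pi_pos]

lemma aux_strip (G : ℂ → ℂ) (hG : DifferentiableOn ℂ G (ball 0 1))
    (hr : ∀ w ∈ ball (0 : ℂ) 1, (G w).re ∈ Set.Ioo (-1 : ℝ) 1) :
    ‖deriv G 0‖ ≤ 4 / π * Real.cos (π / 2 * (G 0).re) := by
  have h0 : (0 : ℂ) ∈ ball (0 : ℂ) 1 := by simp
  set a := G 0 with ha
  set A : ℂ → ℂ := fun w => ((π / 4 : ℝ) : ℂ) * (G w - a) with hA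
  set B : ℂ → ℂ := fun w => ((π / 4 : ℝ) : ℂ) * (G w + (starRingEnd ℂ) a) with hB
  have hlt : ∀ w ∈ ball (0 : ℂ) 1, ‖Complex.sin (A w)‖ < ‖Complex.cos (B w)‖ := by
    intro w hw
    apply aux_sin_lt_cos
    · simp only [hA, hB, Complex.im_ofReal_mul, Complex.sub_im, Complex.add_im, Complex.conj_im]
      ring
    · simp only [hA, hB, Complex.re_ofReal_mul, Complex.sub_re, Complex.add_re, Complex.conj_re]
      rw [show 2 * (π / 4 * ((G w).re - a.re)) = π / 2 * (G w).re - π / 2 * a.re by ring,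
        show 2 * (π / 4 * ((G w).re + a.re)) = π / 2 * (G w).re + π / 2 * a.re by ring,
        Real.cos_sub, Real.cos_add]
      have := mul_pos (aux_cos_pos _ (hr w hw)) (aux_cos_pos _ (hr 0 h0))
      rw [← ha] at this
      linarith
  have hne : ∀ w ∈ ball (0 : ℂ) 1, Complex.cos (B w) ≠ 0 := fun w hw h => by
    have := hlt w hw
    rw [h, norm_zero] at this
    exact absurd this (not_lt.mpr (norm_nonneg _))
  set H : ℂ → ℂ := fun w => Complex.sin (A w) / Complex.cos (B w) with hH
  have hAd : DifferentiableOn ℂ A (ball 0 1) := (hG.sub_const a).const_mul _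
  have hBd : DifferentiableOn ℂ B (ball 0 1) := (hG.add_const _).const_mul _
  have hHd : DifferentiableOn ℂ H (ball 0 1) := hAd.csin.div hBd.ccos hne
  have hA0 : A 0 = 0 := by simp [hA, ← ha]
  have hH0 : H 0 = 0 := by simp [hH, hA0]
  have hmaps : Set.MapsTo H (ball 0 1) (closedBall (H 0) 1) := by
    intro w hw
    rw [hH0, mem_closedBall_zero_iff, hH]
    simp only [norm_div]
    exact div_le_one_of_le₀ (hlt w hw).le (norm_nonneg _)
  have hs := Complex.norm_deriv_le_one_of_mapsTo_ball hHd hmaps one_pos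
  have hGd : HasDerivAt G (deriv G 0) 0 :=
    (hG.differentiableAt (isOpen_ball.mem_nhds h0)).hasDerivAt
  have hAD : HasDerivAt A (((π / 4 : ℝ) : ℂ) * deriv G 0) 0 := (hGd.sub_const a).const_mul _
  have hBD : HasDerivAt B (((π / 4 : ℝ) : ℂ) * deriv G 0) 0 := (hGd.add_const _).const_mul _
  have hHD := (hAD.csin.div hBD.ccos (hne 0 h0)).deriv
  have hB0 : Complex.cos (B 0) = (Real.cos (π / 2 * a.re) : ℝ) := by
    have : B 0 = ((π / 2 * a.re : ℝ) : ℂ) := by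
      simp only [hB, ← ha, Complex.add_conj]; push_cast; ring
    rw [this, Complex.ofReal_cos]
  have hcp := aux_cos_pos _ (hr 0 h0)
  rw [← ha] at hcp
  have hD : deriv H 0 = ((π / 4 : ℝ) : ℂ) * deriv G 0 / (Real.cos (π / 2 * a.re) : ℝ) := by
    have hn := hne 0 h0
    rw [show H = (fun w => Complex.sin (A w)) / (fun w => Complex.cos (B w)) from rfl, hHD,
      hA0, Complex.sin_zero, Complex.cos_zero, ← hB0]
    field_simp
    ring
  rw [hD, norm_div, norm_mul, Complex.norm_real, Complex.norm_real, Real.norm_of_nonneg hcp.le,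
    Real.norm_of_nonneg (by positivity), div_le_one hcp] at hs
  have hpi := Real.pi_pos
  calc ‖deriv G 0‖ = 4 / π * (π / 4 * ‖deriv G 0‖) := by field_simp
    _ ≤ _ := by gcongr

lemma aux_mobius (z : ℂ) (hz : ‖z‖ < 1) (w : ℂ) (hw : ‖w‖ < 1) :
    1 + (starRingEnd ℂ) z * w ≠ 0 ∧ ‖(w + z) / (1 + (starRingEnd ℂ) z * w)‖ < 1 := by
  have h : ‖w + z‖ ^ 2 < ‖1 + (starRingEnd ℂ) z * w‖ ^ 2 := by
    have e : ‖1 + (starRingEnd ℂ) z * w‖ ^ 2 - ‖w + z‖ ^ 2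
        = (1 - ‖z‖ ^ 2) * (1 - ‖w‖ ^ 2) := by
      simp only [← Complex.normSq_eq_norm_sq, Complex.normSq_apply, Complex.add_re, Complex.add_im,
        Complex.mul_re, Complex.mul_im, Complex.conj_re, Complex.conj_im, Complex.one_re,
        Complex.one_im]
      ring
    have h1 : 0 < 1 - ‖z‖ ^ 2 := by nlinarith [norm_nonneg z]
    have h2 : 0 < 1 - ‖w‖ ^ 2 := by nlinarith [norm_nonneg w]
    nlinarith [mul_pos h1 h2]
  have h' := lt_of_pow_lt_pow_left₀ 2 (norm_nonneg _) h
  have hp := (norm_nonneg _).trans_lt h'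
  exact ⟨norm_pos_iff.mp hp, by rw [norm_div, div_lt_one hp]; exact h'⟩

lemma aux_strip' (F : ℂ → ℂ) (hF : DifferentiableOn ℂ F (ball 0 1))
    (hr : ∀ w ∈ ball (0 : ℂ) 1, (F w).re ∈ Set.Ioo (-1 : ℝ) 1) (z : ℂ) (hz : z ∈ ball (0 : ℂ) 1) :
    ‖deriv F z‖ * (1 - ‖z‖ ^ 2) ≤ 4 / π * Real.cos (π / 2 * (F z).re) := by
  have hz' : ‖z‖ < 1 := by simpa using hz
  set M : ℂ → ℂ := fun w => (w + z) / (1 + (starRingEnd ℂ) z * w) with hM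
  have hmaps : Set.MapsTo M (ball 0 1) (ball 0 1) := fun w hw => by
    rw [mem_ball_zero_iff] at hw ⊢
    exact (aux_mobius z hz' w hw).2
  have hMd : DifferentiableOn ℂ M (ball 0 1) := by
    apply DifferentiableOn.div (by fun_prop) (by fun_prop)
    intro w hw
    exact (aux_mobius z hz' w (by simpa using hw)).1
  have hM0 : M 0 = z := by simp [hM]
  have hs := aux_strip (F ∘ M) (hF.comp hMd hmaps) (fun w hw => hr _ (hmaps hw))
  have hMD : HasDerivAt M (1 - (‖z‖ ^ 2 : ℝ)) 0 := by
    have h1 : HasDerivAt (fun w : ℂ => w + z) 1 0 := (hasDerivAt_id _).add_const _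
    have h2 : HasDerivAt (fun w : ℂ => 1 + (starRingEnd ℂ) z * w) ((starRingEnd ℂ) z * 1) 0 :=
      ((hasDerivAt_id _).const_mul _).const_add _
    have h3 := h1.div h2 (by simp)
    refine h3.congr_deriv ?_
    simp [Complex.mul_conj, Complex.normSq_eq_norm_sq]
  have hFD : HasDerivAt F (deriv F z) (M 0) := by
    rw [hM0]; exact (hF.differentiableAt (isOpen_ball.mem_nhds hz)).hasDerivAt
  have hD := (hFD.comp 0 hMD).deriv
  rw [hD, norm_mul, Function.comp_apply, hM0] at hs
  have : ‖(1 : ℂ) - (‖z‖ ^ 2 : ℝ)‖ = 1 - ‖z‖ ^ 2 := by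
    rw [← Complex.ofReal_one, ← Complex.ofReal_sub, Complex.norm_real, Real.norm_of_nonneg]
    nlinarith [norm_nonneg z]
  rwa [this] at hs

/-- **Sharp Schwarz lemma for real harmonic functions** (Kalaj–Vuorinen, Theorem 1).
If `f` is a real harmonic function of the unit disk into `(-1, 1)`, then
`|∇f(z)| ≤ (4/π) (1 - f(z)²)/(1 - |z|²)` for every `z` in the disk. -/
theorem grad_bound_real_harmonic
    (f : ℂ → ℝ)
    (hf_smooth : ContDiffOn ℝ 2 f (ball (0 : ℂ) 1))
    (hf_harm : ∀ z ∈ ball (0 : ℂ) 1,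
      fderiv ℝ (fun w => fderiv ℝ f w 1) z 1
        + fderiv ℝ (fun w => fderiv ℝ f w Complex.I) z Complex.I = 0)
    (hf_range : ∀ z ∈ ball (0 : ℂ) 1, f z ∈ Set.Ioo (-1 : ℝ) 1) :
    ∀ z ∈ ball (0 : ℂ) 1,
      ‖gradient f z‖ ≤ (4 / π) * (1 - (f z) ^ 2) / (1 - ‖z‖ ^ 2) := by
  intro z hz
  have hcd : ∀ x ∈ ball (0 : ℂ) 1, ContDiffAt ℝ 2 f x := fun x hx =>
    hf_smooth.contDiffAt (isOpen_ball.mem_nhds hx)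
  have hlap : ∀ x ∈ ball (0 : ℂ) 1, Laplacian.laplacian f x = 0 := by
    intro x hx
    rw [InnerProductSpace.laplacian_eq_iteratedFDeriv_complexPlane]
    have hd : DifferentiableAt ℝ (fderiv ℝ f) x :=
      ((hcd x hx).fderiv_right (m := 1) (by norm_num)).differentiableAt (by norm_num)
    rw [← hf_harm x hx]
    have key : ∀ v : ℂ, fderiv ℝ (fun w => fderiv ℝ f w v) x v = fderiv ℝ (fderiv ℝ f) x v v := by
      intro v
      rw [fderiv_clm_apply hd (differentiableAt_const v)]
      simp
    simp only [iteratedFDeriv_two_apply, key]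
    simp
  have hharm : InnerProductSpace.HarmonicOnNhd f (ball 0 1) := fun x hx =>
    ⟨hcd x hx, Filter.eventually_of_mem (isOpen_ball.mem_nhds hx) hlap⟩
  obtain ⟨F, hF, hFf⟩ := hharm.exists_analyticOnNhd_ball_re_eq
  have hFd : DifferentiableOn ℂ F (ball 0 1) := hF.differentiableOn
  have hs := aux_strip' F hFd (fun w hw => by
    have := hFf hw
    simp only at this
    rw [this]; exact hf_range w hw) z hz
  have hfz : (F z).re = f z := hFf hz
  rw [hfz] at hs
  have hgrad : ‖gradient f z‖ ≤ ‖deriv F z‖ := by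
    rw [gradient, LinearIsometryEquiv.norm_map]
    have hFz : HasFDerivAt F (fderiv ℂ F z) z :=
      (hFd.differentiableAt (isOpen_ball.mem_nhds hz)).hasFDerivAt
    have h1 : HasFDerivAt f (reCLM.comp ((fderiv ℂ F z).restrictScalars ℝ)) z := by
      refine (reCLM.hasFDerivAt.comp z (hFz.restrictScalars ℝ)).congr_of_eventuallyEq ?_
      filter_upwards [isOpen_ball.mem_nhds hz] with w hw
      exact (hFf hw).symm
    rw [h1.fderiv]
    refine ContinuousLinearMap.opNorm_le_bound _ (norm_nonneg _) fun v => ?_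
    rw [norm_deriv_eq_norm_fderiv]
    calc _ ≤ ‖fderiv ℂ F z v‖ := Complex.abs_re_le_norm _
      _ ≤ _ := (fderiv ℂ F z).le_opNorm v
  have hz' : ‖z‖ < 1 := by simpa using hz
  have hp : 0 < 1 - ‖z‖ ^ 2 := by nlinarith [norm_nonneg z]
  rw [le_div_iff₀ hp]
  have hr := hf_range z hz
  calc _ ≤ ‖deriv F z‖ * (1 - ‖z‖ ^ 2) := by gcongr
    _ ≤ _ := hs
    _ ≤ _ := by
      have := aux_cos_le (f z) (abs_le.mpr ⟨hr.1.le, hr.2.le⟩)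
      have hpi := Real.pi_pos
      gcongr
end

section
/- Let f be a harmonic function of the open unit disk U = {z ∈ ℂ : |z| < 1} into the open interval (-1, 1). Then for all z, w ∈ U, |artanh(f(z)) - artanh(f(w))| ≤ (4/π) · artanh(|z - w| / |1 - z·conj(w)|). In other words, f decreases hyperbolic distances up to the factor 4/π, where the hyperbolic distance on (-1,1) is d_h(x,y) = |artanh x - artanh y| and the hyperbolic distance on U is d_h(z,w) = artanh(|z - w|/|1 - z·conj(w)|). -/
open Complex Metric Real

/-- The inverse hyperbolic tangent, `artanh t = (1/2) log ((1+t)/(1-t))`. -/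
noncomputable def artanh (t : ℝ) : ℝ := (1 / 2) * Real.log ((1 + t) / (1 - t))

lemma hhc_cos_le (x : ℝ) (hx : |x| ≤ 1) : Real.cos (π / 2 * x) ≤ 1 - x ^ 2 := by
  wlog h : 0 ≤ x generalizing x with H
  · have := H (-x) (by simpa using hx) (by linarith)
    simpa using this
  have hx1 : x ≤ 1 := (abs_le.1 hx).2
  have hpi := Real.pi_pos
  have hc := strictConcaveOn_sin_Icc.concaveOn.2
    (show (0 : ℝ) ∈ Set.Icc 0 π from ⟨le_rfl, hpi.le⟩)
    (show π / 4 ∈ Set.Icc 0 π from ⟨by linarith, by linarith⟩)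
    (show (0 : ℝ) ≤ 1 - x by linarith) h (by ring)
  simp only [smul_eq_mul, mul_zero, zero_add, Real.sin_zero, Real.sin_pi_div_four] at hc
  have h2 : Real.cos (π / 2 * x) = 1 - 2 * Real.sin (x * (π / 4)) ^ 2 := by
    have : π / 2 * x = 2 * (x * (π / 4)) := by ring
    rw [this, Real.cos_two_mul, Real.cos_sq']
    ring
  rw [h2]
  have h3 : (x * (√2 / 2)) ^ 2 ≤ Real.sin (x * (π / 4)) ^ 2 :=
    pow_le_pow_left₀ (by positivity) hc 2
  have h4 : (x * (√2 / 2)) ^ 2 = x ^ 2 / 2 := by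
    rw [mul_pow, div_pow, Real.sq_sqrt (by norm_num)]; ring
  linarith

lemma hhc_halfplane (G : ℂ → ℂ) (hG : DifferentiableOn ℂ G (ball 0 1))
    (hr : ∀ z ∈ ball (0 : ℂ) 1, 0 < (G z).re) : ‖deriv G 0‖ ≤ 2 * (G 0).re := by
  have h0 : (0 : ℂ) ∈ ball (0 : ℂ) 1 := by simp
  have hr0 := hr 0 h0
  have hne : ∀ z ∈ ball (0 : ℂ) 1, G z + (starRingEnd ℂ) (G 0) ≠ 0 := by
    intro z hz h
    have := congrArg Complex.re h
    simp at this
    linarith [hr z hz]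
  have hd : DifferentiableOn ℂ (fun z => (G z - G 0) / (G z + (starRingEnd ℂ) (G 0)))
      (ball 0 1) :=
    (hG.sub_const _).div (hG.add_const _) hne
  have hS := norm_deriv_le_div_of_mapsTo_ball (R₂ := 1) hd (by
    intro z hz
    simp only [sub_self, zero_div, mem_closedBall, dist_zero_right, norm_div]
    apply div_le_one_of_le₀ _ (norm_nonneg _)
    rw [← sq_le_sq₀ (norm_nonneg _) (norm_nonneg _), ← Complex.normSq_eq_norm_sq,
      ← Complex.normSq_eq_norm_sq, Complex.normSq_apply, Complex.normSq_apply]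
    simp
    nlinarith [mul_pos (hr z hz) hr0]) one_pos
  have hG0 : HasDerivAt G (deriv G 0) 0 :=
    (hG.differentiableAt (isOpen_ball.mem_nhds h0)).hasDerivAt
  have hD := (hG0.sub_const (G 0)).div (hG0.add_const ((starRingEnd ℂ) (G 0))) (hne 0 h0)
  have hsum : G 0 + (starRingEnd ℂ) (G 0) = ((2 * (G 0).re : ℝ) : ℂ) := by
    rw [Complex.add_conj]
  have hD' := hD.deriv
  have e : deriv (fun z => (G z - G 0) / (G z + (starRingEnd ℂ) (G 0))) 0
      = deriv G 0 / ((2 * (G 0).re : ℝ) : ℂ) := by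
    refine hD'.trans ?_
    rw [sub_self, zero_mul, sub_zero, ← hsum, sq, mul_div_mul_right _ _ (hne 0 h0)]
  rw [e, norm_div, Complex.norm_real, Real.norm_eq_abs, abs_of_pos (by linarith),
    div_one, div_le_one (by linarith)] at hS
  exact hS

lemma hhc_deriv_zero (F : ℂ → ℂ) (hF : DifferentiableOn ℂ F (ball 0 1))
    (hr : ∀ z ∈ ball (0 : ℂ) 1, |(F z).re| < 1) :
    ‖deriv F 0‖ ≤ 4 / π * (1 - (F 0).re ^ 2) := by
  have h0 : (0 : ℂ) ∈ ball (0 : ℂ) 1 := by simp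
  have hpi := Real.pi_pos
  have hre : ∀ z, (Complex.exp (((π / 2 : ℝ) : ℂ) * Complex.I * F z)).re
      = ‖Complex.exp (((π / 2 : ℝ) : ℂ) * Complex.I * F z)‖ * Real.cos (π / 2 * (F z).re) := by
    intro z
    rw [Complex.exp_re, Complex.norm_exp]
    congr 2
    simp [Complex.mul_im]
  have h := hhc_halfplane (fun z => Complex.exp (((π / 2 : ℝ) : ℂ) * Complex.I * F z))
    (hF.const_mul _).cexp (by
      intro z hz
      show 0 < (Complex.exp (((π / 2 : ℝ) : ℂ) * Complex.I * F z)).re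
      rw [hre]
      have := abs_lt.1 (hr z hz)
      exact mul_pos (norm_pos_iff.2 (Complex.exp_ne_zero _))
        (Real.cos_pos_of_mem_Ioo ⟨by nlinarith, by nlinarith⟩))
  have hF0 : HasDerivAt F (deriv F 0) 0 :=
    (hF.differentiableAt (isOpen_ball.mem_nhds h0)).hasDerivAt
  have hD := ((hF0.const_mul (((π / 2 : ℝ) : ℂ) * Complex.I)).cexp).deriv
  rw [hD, hre, norm_mul, norm_mul, norm_mul, Complex.norm_I, Complex.norm_real,
    Real.norm_eq_abs, abs_of_pos (by positivity)] at h
  have hE : 0 < ‖Complex.exp (((π / 2 : ℝ) : ℂ) * Complex.I * F 0)‖ :=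
    norm_pos_iff.2 (Complex.exp_ne_zero _)
  have h5 : π / 2 * ‖deriv F 0‖ ≤ 2 * Real.cos (π / 2 * (F 0).re) := by
    refine le_of_mul_le_mul_left ?_ hE
    linarith
  have h6 := hhc_cos_le _ (hr 0 h0).le
  rw [div_mul_eq_mul_div, le_div_iff₀ hpi]
  linarith

lemma hhc_den_ne (w z : ℂ) (hw : ‖w‖ < 1) (hz : ‖z‖ < 1) :
    1 + (starRingEnd ℂ) w * z ≠ 0 := by
  intro h
  have h1 : (starRingEnd ℂ) w * z = -1 := by linear_combination h
  have h2 := congrArg norm h1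
  rw [norm_mul, RCLike.norm_conj, norm_neg, norm_one] at h2
  nlinarith [norm_nonneg w, norm_nonneg z]

lemma hhc_norm_lt (w z : ℂ) (hw : ‖w‖ < 1) (hz : ‖z‖ < 1) :
    ‖(z + w) / (1 + (starRingEnd ℂ) w * z)‖ < 1 := by
  have hne := hhc_den_ne w z hw hz
  rw [norm_div, div_lt_one (norm_pos_iff.2 hne),
    ← sq_lt_sq₀ (norm_nonneg _) (norm_nonneg _), ← Complex.normSq_eq_norm_sq,
      ← Complex.normSq_eq_norm_sq]
  have hw2 : Complex.normSq w < 1 := by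
    rw [Complex.normSq_eq_norm_sq]; nlinarith [norm_nonneg w]
  have hz2 : Complex.normSq z < 1 := by
    rw [Complex.normSq_eq_norm_sq]; nlinarith [norm_nonneg z]
  rw [Complex.normSq_apply] at *
  simp [Complex.normSq_apply] at *
  nlinarith [mul_pos (sub_pos.2 hw2) (sub_pos.2 hz2)]

lemma hhc_mobius_diff (F : ℂ → ℂ) (hF : DifferentiableOn ℂ F (ball 0 1)) (w : ℂ)
    (hw : ‖w‖ < 1) :
    DifferentiableOn ℂ (fun z => F ((z + w) / (1 + (starRingEnd ℂ) w * z))) (ball 0 1) := by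
  refine DifferentiableOn.comp (t := ball 0 1) hF ?_ ?_
  · refine DifferentiableOn.div (by fun_prop) (by fun_prop) ?_
    intro z hz
    exact hhc_den_ne w z hw (by simpa using hz)
  · intro z hz
    simpa using hhc_norm_lt w z hw (by simpa using hz)

lemma hhc_deriv (F : ℂ → ℂ) (hF : DifferentiableOn ℂ F (ball 0 1))
    (hr : ∀ z ∈ ball (0 : ℂ) 1, |(F z).re| < 1) (w : ℂ) (hw : ‖w‖ < 1) :
    ‖deriv F w‖ * (1 - ‖w‖ ^ 2) ≤ 4 / π * (1 - (F w).re ^ 2) := by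
  have h := hhc_deriv_zero _ (hhc_mobius_diff F hF w hw) (by
    intro z hz
    exact hr _ (by simpa using hhc_norm_lt w z hw (by simpa using hz)))
  have hFw : HasDerivAt F (deriv F w) ((0 + w) / (1 + (starRingEnd ℂ) w * 0)) := by
    simpa using (hF.differentiableAt (isOpen_ball.mem_nhds (by simpa using hw))).hasDerivAt
  have hm := ((hasDerivAt_id (0 : ℂ)).add_const w).div
    (((hasDerivAt_id (0 : ℂ)).const_mul ((starRingEnd ℂ) w)).const_add 1)
    (by simp)
  have hc : HasDerivAt (fun z => F ((z + w) / (1 + (starRingEnd ℂ) w * z))) _ 0 :=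
    HasDerivAt.comp (0 : ℂ) hFw hm
  rw [hc.deriv] at h
  have e : w * (starRingEnd ℂ) w = ((‖w‖ ^ 2 : ℝ) : ℂ) := by
    rw [Complex.mul_conj, Complex.normSq_eq_norm_sq]
  simp at h
  rw [e, ← Complex.ofReal_one, ← Complex.ofReal_sub, Complex.norm_real, Real.norm_eq_abs,
    abs_of_pos (by nlinarith [norm_nonneg w])] at h
  exact h

lemma hhc_artanh_deriv (x : ℝ) (hx : |x| < 1) :
    HasDerivAt _root_.artanh (1 / (1 - x ^ 2)) x := by
  have h := abs_lt.1 hx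
  have h1 : (1 - x) ≠ 0 := by linarith
  have h2 : (1 + x) ≠ 0 := by linarith
  have h3 : (1 - x ^ 2) ≠ 0 := by
    have : 1 - x ^ 2 = (1 - x) * (1 + x) := by ring
    rw [this]; exact mul_ne_zero h1 h2
  have hd := ((((hasDerivAt_id x).const_add 1).div ((hasDerivAt_id x).const_sub 1) h1).log
    (div_ne_zero h2 h1)).const_mul (1 / 2 : ℝ)
  refine HasDerivAt.congr_deriv (f := _root_.artanh) hd ?_
  simp only [id, Pi.div_apply]
  field_simp
  ring

lemma hhc_radial (F : ℂ → ℂ) (hF : DifferentiableOn ℂ F (ball 0 1))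
    (hr : ∀ z ∈ ball (0 : ℂ) 1, |(F z).re| < 1) (z : ℂ) (hz : ‖z‖ < 1) :
    |_root_.artanh (F z).re - _root_.artanh (F 0).re| ≤ 4 / π * _root_.artanh ‖z‖ := by
  have hn : ∀ t ∈ Set.Icc (0 : ℝ) 1, ‖(t : ℂ) * z‖ < 1 := by
    intro t ht
    rw [norm_mul, Complex.norm_real, Real.norm_eq_abs, abs_of_nonneg ht.1]
    nlinarith [norm_nonneg z, ht.1, ht.2]
  have hn' : ∀ t ∈ Set.Icc (0 : ℝ) 1, ‖(t : ℂ) * z‖ = t * ‖z‖ := by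
    intro t ht
    rw [norm_mul, Complex.norm_real, Real.norm_eq_abs, abs_of_nonneg ht.1]
  have hA : ∀ t ∈ Set.Icc (0 : ℝ) 1, HasDerivAt
      (fun t : ℝ => _root_.artanh (F (t * z)).re - _root_.artanh (F 0).re)
      (1 / (1 - (F (t * z)).re ^ 2) * (deriv F (t * z) * z).re) t := by
    intro t ht
    have hm : ((t : ℂ) * z) ∈ ball (0 : ℂ) 1 := by simpa using hn t ht
    have h1 : HasDerivAt F (deriv F (t * z)) ((t : ℂ) * z) :=
      (hF.differentiableAt (isOpen_ball.mem_nhds hm)).hasDerivAt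
    have h2 : HasDerivAt (fun s : ℂ => s * z) z (t : ℂ) := by
      simpa using (hasDerivAt_id (t : ℂ)).mul_const z
    have h3 : HasDerivAt (fun s : ℂ => F (s * z)) (deriv F (t * z) * z) (t : ℂ) :=
      HasDerivAt.comp (t : ℂ) h1 h2
    have h4 := h3.real_of_complex
    exact (HasDerivAt.comp t (hhc_artanh_deriv _ (hr _ hm)) h4).sub_const _
  have hB : ∀ t ∈ Set.Icc (0 : ℝ) 1, HasDerivAt
      (fun t : ℝ => 4 / π * _root_.artanh (t * ‖z‖))
      (4 / π * (1 / (1 - (t * ‖z‖) ^ 2) * ‖z‖)) t := by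
    intro t ht
    have h2 : HasDerivAt (fun s : ℝ => s * ‖z‖) ‖z‖ t := by
      simpa using (hasDerivAt_id t).mul_const ‖z‖
    have h5 : |t * ‖z‖| < 1 := by
      rw [← hn' t ht, abs_norm]; exact hn t ht
    exact (HasDerivAt.comp t (hhc_artanh_deriv _ h5) h2).const_mul _
  have key := image_norm_le_of_norm_deriv_right_le_deriv_boundary' (a := 0) (b := 1)
    (fun t ht => (hA t ht).continuousAt.continuousWithinAt)
    (fun t ht => (hA t (Set.Ico_subset_Icc_self ht)).hasDerivWithinAt)
    (B := fun t : ℝ => 4 / π * _root_.artanh (t * ‖z‖))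
    (by simp [_root_.artanh])
    (fun t ht => (hB t ht).continuousAt.continuousWithinAt)
    (fun t ht => (hB t (Set.Ico_subset_Icc_self ht)).hasDerivWithinAt)
    (by
      intro t ht
      have ht' := Set.Ico_subset_Icc_self ht
      have hm : ((t : ℂ) * z) ∈ ball (0 : ℂ) 1 := by simpa using hn t ht'
      have h1 := hhc_deriv F hF hr _ (hn t ht')
      rw [hn' t ht'] at h1
      have hlt := hn t ht'
      rw [hn' t ht'] at hlt
      have h0 : 0 ≤ t * ‖z‖ := mul_nonneg ht.1 (norm_nonneg _)
      have p1 : 0 < 1 - (t * ‖z‖) ^ 2 := by nlinarith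
      have p2 : 0 < 1 - (F (t * z)).re ^ 2 := by
        have := (sq_lt_one_iff_abs_lt_one _).2 (hr _ hm)
        linarith
      rw [Real.norm_eq_abs, abs_mul, abs_of_pos (by positivity)]
      have h2 : |(deriv F (t * z) * z).re| ≤ ‖deriv F (t * z)‖ * ‖z‖ := by
        rw [← norm_mul]; exact Complex.abs_re_le_norm _
      have h3 : 1 / (1 - (F (t * z)).re ^ 2) * ‖deriv F (t * z)‖
          ≤ 4 / π * (1 / (1 - (t * ‖z‖) ^ 2)) := by
        rw [one_div_mul_eq_div, mul_one_div, div_le_div_iff₀ p2 p1]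
        exact h1
      calc _ ≤ 1 / (1 - (F (t * z)).re ^ 2) * (‖deriv F (t * z)‖ * ‖z‖) := by gcongr
        _ = 1 / (1 - (F (t * z)).re ^ 2) * ‖deriv F (t * z)‖ * ‖z‖ := by ring
        _ ≤ 4 / π * (1 / (1 - (t * ‖z‖) ^ 2)) * ‖z‖ := by gcongr
        _ = _ := by ring)
    (Set.right_mem_Icc.2 zero_le_one)
  simpa using key

lemma hhc_harmonic (f : ℂ → ℝ)
    (hf_smooth : ContDiffOn ℝ 2 f (ball (0 : ℂ) 1))
    (hf_harm : ∀ z ∈ ball (0 : ℂ) 1,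
      fderiv ℝ (fun w => fderiv ℝ f w 1) z 1
        + fderiv ℝ (fun w => fderiv ℝ f w Complex.I) z Complex.I = 0) :
    InnerProductSpace.HarmonicOnNhd f (ball 0 1) := by
  intro x hx
  refine ⟨hf_smooth.contDiffAt (isOpen_ball.mem_nhds hx), ?_⟩
  filter_upwards [isOpen_ball.mem_nhds hx] with z hz
  have hd : DifferentiableAt ℝ (fderiv ℝ f) z :=
    ((hf_smooth.contDiffAt (isOpen_ball.mem_nhds hz)).fderiv_right (m := 1)
      (by norm_num)).differentiableAt (by norm_num)
  rw [InnerProductSpace.laplacian_eq_iteratedFDeriv_complexPlane]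
  have h := hf_harm z hz
  have e : ∀ v : ℂ, fderiv ℝ (fun w => fderiv ℝ f w v) z v = fderiv ℝ (fderiv ℝ f) z v v := by
    intro v
    rw [fderiv_clm_apply hd (differentiableAt_const v)]
    simp
  rw [e, e] at h
  simpa [iteratedFDeriv_two_apply] using h

/-- **Hyperbolic Schwarz–Pick lemma for real harmonic functions**
(Kalaj–Vuorinen, Theorem 3). A harmonic function of the unit disk into `(-1, 1)`
decreases hyperbolic distances up to the factor `4/π`:
`d_h(f(z), f(w)) ≤ (4/π) d_h(z, w)`. -/
theorem harmonic_hyperbolic_contraction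
    (f : ℂ → ℝ)
    (hf_smooth : ContDiffOn ℝ 2 f (ball (0 : ℂ) 1))
    (hf_harm : ∀ z ∈ ball (0 : ℂ) 1,
      fderiv ℝ (fun w => fderiv ℝ f w 1) z 1
        + fderiv ℝ (fun w => fderiv ℝ f w Complex.I) z Complex.I = 0)
    (hf_range : ∀ z ∈ ball (0 : ℂ) 1, f z ∈ Set.Ioo (-1 : ℝ) 1) :
    ∀ z ∈ ball (0 : ℂ) 1, ∀ w ∈ ball (0 : ℂ) 1,
      |_root_.artanh (f z) - _root_.artanh (f w)|
        ≤ (4 / π) * _root_.artanh (‖z - w‖ / ‖1 - z * (starRingEnd ℂ) w‖) := by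
  obtain ⟨F, hFa, hFe⟩ :=
    (hhc_harmonic f hf_smooth hf_harm).exists_analyticOnNhd_ball_re_eq
  have hF : DifferentiableOn ℂ F (ball 0 1) := hFa.differentiableOn
  have hr : ∀ z ∈ ball (0 : ℂ) 1, |(F z).re| < 1 := by
    intro z hz
    have h1 : (F z).re = f z := hFe hz
    rw [h1]
    exact abs_lt.2 (hf_range z hz)
  intro z hz w hw
  have hz' : ‖z‖ < 1 := by simpa using hz
  have hw' : ‖w‖ < 1 := by simpa using hw
  have hnw : ‖-w‖ < 1 := by simpa using hw'
  have hζ := hhc_norm_lt (-w) z hnw hz'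
  have hd := hhc_den_ne (-w) z hnw hz'
  have h := hhc_radial _ (hhc_mobius_diff F hF w hw') (by
    intro z hz
    exact hr _ (by simpa using hhc_norm_lt w z hw' (by simpa using hz))) _ hζ
  have hd2 := hhc_den_ne w _ hw' hζ
  have e : ((z + -w) / (1 + (starRingEnd ℂ) (-w) * z) + w) /
      (1 + (starRingEnd ℂ) w * ((z + -w) / (1 + (starRingEnd ℂ) (-w) * z))) = z := by
    rw [div_eq_iff hd2]
    rw [map_neg] at hd ⊢
    obtain ⟨D, hD⟩ : ∃ D, D = 1 + -(starRingEnd ℂ) w * z := ⟨_, rfl⟩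
    rw [← hD] at hd ⊢
    field_simp
    rw [hD]
    ring
  have e2 : ‖(z + -w) / (1 + (starRingEnd ℂ) (-w) * z)‖
      = ‖z - w‖ / ‖1 - z * (starRingEnd ℂ) w‖ := by
    rw [norm_div, map_neg]
    congr 2
    ring
  have ez : (F z).re = f z := hFe hz
  have ew : (F w).re = f w := hFe hw
  rw [e, e2] at h
  simpa [ez, ew] using h
end

section
/- Let f be a real-valued harmonic function of the open unit disk U = {z ∈ ℂ : |z| < 1} into the open interval (-1, 1). Then the gradient of f at the origin satisfies the sharp inequality |∇f(0)| ≤ 4/π. -/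
open Complex Metric Real

theorem aux_harm (f : ℂ → ℝ)
    (hf_smooth : ContDiffOn ℝ 2 f (ball (0 : ℂ) 1))
    (hf_harm : ∀ z ∈ ball (0 : ℂ) 1,
      fderiv ℝ (fun w => fderiv ℝ f w 1) z 1
        + fderiv ℝ (fun w => fderiv ℝ f w Complex.I) z Complex.I = 0) :
    InnerProductSpace.HarmonicOnNhd f (ball (0 : ℂ) 1) := by
  have hc : ∀ z ∈ ball (0 : ℂ) 1, ContDiffAt ℝ 2 f z := fun z hz =>
    hf_smooth.contDiffAt (isOpen_ball.mem_nhds hz)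
  intro x hx
  refine ⟨hc x hx, ?_⟩
  filter_upwards [isOpen_ball.mem_nhds hx] with z hz
  have h1 := hc z hz
  have h2 : DifferentiableAt ℝ (fderiv ℝ f) z :=
    (h1.fderiv_right (m := 1) (by norm_num)).differentiableAt (by norm_num)
  have h := hf_harm z hz
  rw [fderiv_clm_apply h2 (by fun_prop), fderiv_clm_apply h2 (by fun_prop)] at h
  simpa [InnerProductSpace.laplacian_eq_iteratedFDeriv_complexPlane, iteratedFDeriv_two_apply]
    using h

theorem aux_le (g a : ℂ) (hg : 0 < g.re) (ha : 0 < a.re) :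
    ‖(g - a) / (g + starRingEnd ℂ a)‖ ≤ 1 := by
  rw [norm_div]
  apply div_le_one_of_le₀ _ (norm_nonneg _)
  rw [← sq_le_sq₀ (norm_nonneg _) (norm_nonneg _), ← Complex.normSq_eq_norm_sq,
    ← Complex.normSq_eq_norm_sq, Complex.normSq_apply, Complex.normSq_apply]
  simp
  nlinarith [mul_pos hg ha]

theorem aux_deriv (F : ℂ → ℂ) (hF : DifferentiableOn ℂ F (ball 0 1))
    (hr : ∀ z ∈ ball (0 : ℂ) 1, (F z).re ∈ Set.Ioo (-1 : ℝ) 1) :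
    ‖deriv F 0‖ ≤ 4 / π := by
  have h0 : (0 : ℂ) ∈ ball (0 : ℂ) 1 := by simp
  set c : ℂ := (π / 2 : ℝ) * Complex.I with hc
  set G : ℂ → ℂ := fun z => Complex.exp (c * F z) with hG
  have hGre : ∀ z ∈ ball (0 : ℂ) 1, 0 < (G z).re := by
    intro z hz
    obtain ⟨h1, h2⟩ := hr z hz
    have him : (c * F z).im = π / 2 * (F z).re := by simp [hc]
    simp only [hG, Complex.exp_re, him]
    refine mul_pos (Real.exp_pos _) (Real.cos_pos_of_mem_Ioo ⟨?_, ?_⟩) <;> nlinarith [Real.pi_pos]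
  set a := G 0 with ha
  have hare : 0 < a.re := hGre 0 h0
  have hne : ∀ z ∈ ball (0 : ℂ) 1, G z + starRingEnd ℂ a ≠ 0 := by
    intro z hz h
    have := congrArg Complex.re h
    simp at this
    linarith [hGre z hz]
  have hGd : DifferentiableOn ℂ G (ball 0 1) := (hF.const_mul c).cexp
  set φ : ℂ → ℂ := fun z => (G z - a) / (G z + starRingEnd ℂ a) with hφ
  have hφd : DifferentiableOn ℂ φ (ball 0 1) :=
    (hGd.sub_const a).div (hGd.add_const _) hne
  have hφ0 : φ 0 = 0 := by simp [hφ, ← ha]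
  have key : ‖deriv φ 0‖ ≤ 1 := by
    refine Complex.norm_deriv_le_one_of_mapsTo_ball hφd ?_ one_pos
    intro z hz
    rw [hφ0, mem_closedBall_zero_iff]
    exact aux_le _ _ (hGre z hz) hare
  have hF0 : HasDerivAt F (deriv F 0) 0 :=
    (hF.differentiableAt (isOpen_ball.mem_nhds h0)).hasDerivAt
  have hG0 : HasDerivAt G (a * (c * deriv F 0)) 0 := (hF0.const_mul c).cexp
  have hsum : a + starRingEnd ℂ a = (2 * a.re : ℝ) := by
    rw [Complex.add_conj]
  have hφ' : HasDerivAt φ (a * (c * deriv F 0) / (2 * a.re : ℝ)) 0 := by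
    have := (hG0.sub_const a).div (hG0.add_const (starRingEnd ℂ a)) (hne 0 h0)
    refine HasDerivAt.congr_deriv this ?_
    have h2 : ((2 * a.re : ℝ) : ℂ) ≠ 0 := by
      exact_mod_cast (by positivity : (2 * a.re) ≠ 0)
    rw [← ha, hsum]
    field_simp
    ring
  rw [hφ'.deriv, norm_div, norm_mul, norm_mul, Complex.norm_real, Real.norm_eq_abs,
    abs_of_pos (by positivity), div_le_one (by positivity)] at key
  have hcn : ‖c‖ = π / 2 := by
    rw [hc, norm_mul, Complex.norm_I, Complex.norm_real, Real.norm_eq_abs,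
      abs_of_pos (by positivity), mul_one]
  rw [hcn] at key
  have hle : a.re ≤ ‖a‖ := Complex.re_le_norm a
  have hapos : 0 < ‖a‖ := hare.trans_le hle
  rw [le_div_iff₀ Real.pi_pos]
  have : ‖a‖ * (π / 2 * ‖deriv F 0‖) ≤ ‖a‖ * 2 := by linarith
  have := le_of_mul_le_mul_left this hapos
  linarith

/-- **Schwarz lemma for real harmonic functions at the origin**
(Axler–Bourdon–Ramey, Theorem 6.26). If `f` is a real harmonic function of the
unit disk into `(-1, 1)`, then `|∇f(0)| ≤ 4/π`. -/
theorem grad_bound_real_harmonic_at_zero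
    (f : ℂ → ℝ)
    (hf_smooth : ContDiffOn ℝ 2 f (ball (0 : ℂ) 1))
    (hf_harm : ∀ z ∈ ball (0 : ℂ) 1,
      fderiv ℝ (fun w => fderiv ℝ f w 1) z 1
        + fderiv ℝ (fun w => fderiv ℝ f w Complex.I) z Complex.I = 0)
    (hf_range : ∀ z ∈ ball (0 : ℂ) 1, f z ∈ Set.Ioo (-1 : ℝ) 1) :
    ‖gradient f 0‖ ≤ 4 / π := by
  obtain ⟨F, hF, hFf⟩ := (aux_harm f hf_smooth hf_harm).exists_analyticOnNhd_ball_re_eq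
  have h0 : (0 : ℂ) ∈ ball (0 : ℂ) 1 := by simp
  have hd := aux_deriv F hF.differentiableOn (fun z hz => by
    have := hFf hz
    simp only at this
    rw [this]; exact hf_range z hz)
  refine le_trans ?_ hd
  have hF0 : HasFDerivAt F _ 0 :=
    (hF 0 h0).differentiableAt.hasDerivAt.hasFDerivAt.restrictScalars ℝ
  have h1 : HasFDerivAt (fun z => (F z).re) _ 0 := Complex.reCLM.hasFDerivAt.comp 0 hF0
  have h2 := h1.congr_of_eventuallyEq (f₁ := f) (by
    filter_upwards [isOpen_ball.mem_nhds h0] with z hz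
    exact (hFf hz).symm)
  rw [← (InnerProductSpace.toDual ℝ ℂ).norm_map, toDual_gradient, h2.fderiv]
  refine ContinuousLinearMap.opNorm_le_bound _ (norm_nonneg _) fun v => ?_
  simp only [ContinuousLinearMap.comp_apply, Complex.reCLM_apply, Real.norm_eq_abs]
  refine (Complex.abs_re_le_norm _).trans ?_
  simp [mul_comm]
end

section
/- Let f : U → U be a complex-valued harmonic function of the open unit disk U = {z ∈ ℂ : |z| < 1} into itself with f(0) = 0. Then |f(z)| ≤ (4/π) · arctan(|z|) for every z ∈ U. -/
open Complex Metric Real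

lemma hsl_sq {a b : ℝ} (h : a ^ 2 ≤ b ^ 2) (hb : 0 ≤ b) : a ≤ b :=
  (abs_le.1 (abs_le_of_sq_le_sq h hb)).2

lemma hsl_harm (u : ℂ → ℝ) (hs : ContDiffOn ℝ 2 u (ball (0 : ℂ) 1))
    (hh : ∀ z ∈ ball (0 : ℂ) 1,
      fderiv ℝ (fun w => fderiv ℝ u w 1) z 1
        + fderiv ℝ (fun w => fderiv ℝ u w Complex.I) z Complex.I = 0) :
    InnerProductSpace.HarmonicOnNhd u (ball (0 : ℂ) 1) := by
  intro z hz
  have hd : ∀ w ∈ ball (0 : ℂ) 1, ContDiffAt ℝ 2 u w :=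
    fun w hw => hs.contDiffAt (isOpen_ball.mem_nhds hw)
  refine ⟨hd z hz, ?_⟩
  filter_upwards [isOpen_ball.mem_nhds hz] with w hw
  have h2 : DifferentiableAt ℝ (fderiv ℝ u) w :=
    ((hd w hw).fderiv_right (m := 1) (by norm_num)).differentiableAt (by norm_num)
  have key : ∀ v : ℂ, fderiv ℝ (fun w => fderiv ℝ u w v) w v = fderiv ℝ (fderiv ℝ u) w v v := by
    intro v
    rw [fderiv_clm_apply h2 (differentiableAt_const v)]
    simp
  have := hh w hw
  rw [key, key] at this
  rw [InnerProductSpace.laplacian_eq_iteratedFDeriv_complexPlane]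
  simpa [iteratedFDeriv_two_apply] using this

lemma hsl_real (u : ℂ → ℝ) (hu : InnerProductSpace.HarmonicOnNhd u (ball (0 : ℂ) 1))
    (hb : ∀ z ∈ ball (0 : ℂ) 1, |u z| < 1) (h0 : u 0 = 0) (z : ℂ) (hz : z ∈ ball (0 : ℂ) 1) :
    u z ≤ (4 / π) * Real.arctan ‖z‖ := by
  obtain ⟨F, hF, hFu⟩ := hu.exists_analyticOnNhd_ball_re_eq
  have h0m : (0 : ℂ) ∈ ball (0 : ℂ) 1 := by simp
  have hpi := Real.pi_pos
  set θ : ℂ → ℝ := fun w => π / 2 * u w with hθ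
  set ρ : ℂ → ℝ := fun w => Real.exp (-(π / 2 * (F w - F 0).im)) with hρ
  set E : ℂ → ℂ := fun w => Complex.exp (Complex.I * ((π / 2 : ℝ) : ℂ) * (F w - F 0)) with hE
  have hF0 : (F 0).re = 0 := by rw [← h0]; exact hFu h0m
  have hEre : ∀ w ∈ ball (0 : ℂ) 1, (E w).re = ρ w * Real.cos (θ w) := by
    intro w hw
    have : (F w).re = u w := hFu hw
    simp only [hE, hρ, hθ, Complex.exp_re, ← this]
    congr 2 <;> simp [hF0]
  have hEim : ∀ w ∈ ball (0 : ℂ) 1, (E w).im = ρ w * Real.sin (θ w) := by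
    intro w hw
    have : (F w).re = u w := hFu hw
    simp only [hE, hρ, hθ, Complex.exp_im, ← this]
    congr 2 <;> simp [hF0]
  have hc : ∀ w ∈ ball (0 : ℂ) 1, 0 < Real.cos (θ w) := by
    intro w hw
    have := abs_lt.1 (hb w hw)
    apply Real.cos_pos_of_mem_Ioo
    constructor <;> simp only [hθ] <;> nlinarith
  have hρp : ∀ w, 0 < ρ w := fun w => Real.exp_pos _
  have hp : ∀ w ∈ ball (0 : ℂ) 1, 0 < (E w).re := by
    intro w hw
    rw [hEre w hw]; exact mul_pos (hρp w) (hc w hw)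
  have hne : ∀ w ∈ ball (0 : ℂ) 1, E w + 1 ≠ 0 := by
    intro w hw h
    have := congrArg Complex.re h
    have h' := hp w hw
    simp at this
    linarith
  have hEd : DifferentiableOn ℂ E (ball 0 1) := by
    have := hF.differentiableOn
    exact ((this.sub_const _).const_mul _).cexp
  have hTd : DifferentiableOn ℂ (fun w => (E w - 1) / (E w + 1)) (ball 0 1) :=
    (hEd.sub_const 1).div (hEd.add_const 1) hne
  have hT0 : (fun w => (E w - 1) / (E w + 1)) 0 = 0 := by simp [hE]
  have hmaps : Set.MapsTo (fun w => (E w - 1) / (E w + 1)) (ball 0 1) (closedBall 0 1) := by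
    intro w hw
    have h1 : 0 < ‖E w + 1‖ := norm_pos_iff.2 (hne w hw)
    simp only [mem_closedBall_zero_iff, norm_div]
    rw [div_le_one h1]
    refine hsl_sq ?_ h1.le
    rw [← Complex.normSq_eq_norm_sq, ← Complex.normSq_eq_norm_sq, Complex.normSq_apply,
      Complex.normSq_apply]
    have := hp w hw
    simp
    nlinarith
  have hS := Complex.norm_le_norm_of_mapsTo_ball hTd hmaps hT0 (mem_ball_zero_iff.1 hz)
  have h1 : 0 < ‖E z + 1‖ := norm_pos_iff.2 (hne z hz)
  simp only [norm_div] at hS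
  rw [div_le_iff₀ h1] at hS
  have hsq : ‖E z - 1‖ ^ 2 ≤ (‖z‖ * ‖E z + 1‖) ^ 2 := by gcongr
  rw [mul_pow, ← Complex.normSq_eq_norm_sq (E z - 1), ← Complex.normSq_eq_norm_sq (E z + 1), Complex.normSq_apply,
    Complex.normSq_apply] at hsq
  simp [hEre z hz, hEim z hz] at hsq
  have hub := abs_lt.1 (hb z hz)
  set φ := π / 4 * u z with hφ
  have hθφ : θ z = 2 * φ := by simp only [hθ, hφ]; ring
  have hcp : 0 < Real.cos φ := by
    apply Real.cos_pos_of_mem_Ioo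
    constructor <;> simp only [hφ] <;> nlinarith
  have hcs := hc z hz
  have hsc := Real.sin_sq_add_cos_sq (θ z)
  have hr := hρp z
  have hm : (1 - Real.cos (θ z)) ≤ ‖z‖ ^ 2 * (1 + Real.cos (θ z)) := by
    generalize Real.cos (θ z) = c at *
    generalize Real.sin (θ z) = s at *
    generalize ρ z = r at *
    have e1 : r ^ 2 + 1 - 2 * r * c ≤ ‖z‖ ^ 2 * (r ^ 2 + 1 + 2 * r * c) := by
      have : s ^ 2 = 1 - c ^ 2 := by linarith
      have e2 : (r * c - 1) * (r * c - 1) + r * s * (r * s) = r ^ 2 + 1 - 2 * r * c := by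
        linear_combination r ^ 2 * this
      have e3 : (r * c + 1) * (r * c + 1) + r * s * (r * s) = r ^ 2 + 1 + 2 * r * c := by
        linear_combination r ^ 2 * this
      rw [e2, e3] at hsq
      exact hsq
    have hpos : 0 < r ^ 2 + 1 + 2 * r * c := by positivity
    have e4 : (1 - c) * (r ^ 2 + 1 + 2 * r * c) ≤ (r ^ 2 + 1 - 2 * r * c) * (1 + c) := by
      nlinarith [mul_nonneg hcs.le (sq_nonneg (r - 1))]
    have e5 : (r ^ 2 + 1 - 2 * r * c) * (1 + c) ≤
        ‖z‖ ^ 2 * (r ^ 2 + 1 + 2 * r * c) * (1 + c) :=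
      mul_le_mul_of_nonneg_right e1 (by linarith)
    refine le_of_mul_le_mul_right ?_ hpos
    calc _ ≤ _ := e4.trans e5
      _ = _ := by ring
  have hm2 : Real.sin φ ^ 2 ≤ (‖z‖ * Real.cos φ) ^ 2 := by
    rw [hθφ, Real.cos_two_mul] at hm
    have := Real.sin_sq_add_cos_sq φ
    nlinarith
  have hm3 : Real.sin φ ≤ ‖z‖ * Real.cos φ := hsl_sq hm2 (by positivity)
  have htan : Real.tan φ ≤ ‖z‖ := by
    rw [Real.tan_eq_sin_div_cos, div_le_iff₀ hcp]; exact hm3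
  have hat : φ ≤ Real.arctan ‖z‖ := by
    rw [← Real.arctan_tan (x := φ) (by simp only [hφ]; nlinarith) (by simp only [hφ]; nlinarith)]
    exact Real.arctan_mono htan
  calc u z = 4 / π * φ := by simp only [hφ]; field_simp
    _ ≤ _ := by gcongr

/-- **Schwarz lemma for complex-valued harmonic functions** (Heinz). If `f` is a
harmonic function of the unit disk into itself with `f(0) = 0`, then
`|f(z)| ≤ (4/π) arctan |z|`. -/
theorem harmonic_schwarz_lemma
    (f : ℂ → ℂ)
    (hf_smooth : ContDiffOn ℝ 2 f (ball (0 : ℂ) 1))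
    (hf_harm_re : ∀ z ∈ ball (0 : ℂ) 1,
      fderiv ℝ (fun w => fderiv ℝ (fun u => (f u).re) w 1) z 1
        + fderiv ℝ (fun w => fderiv ℝ (fun u => (f u).re) w Complex.I) z Complex.I = 0)
    (hf_harm_im : ∀ z ∈ ball (0 : ℂ) 1,
      fderiv ℝ (fun w => fderiv ℝ (fun u => (f u).im) w 1) z 1
        + fderiv ℝ (fun w => fderiv ℝ (fun u => (f u).im) w Complex.I) z Complex.I = 0)
    (hf_range : ∀ z ∈ ball (0 : ℂ) 1, f z ∈ ball (0 : ℂ) 1)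
    (hf0 : f 0 = 0) :
    ∀ z ∈ ball (0 : ℂ) 1, ‖f z‖ ≤ (4 / π) * Real.arctan ‖z‖ := by
  intro z hz
  by_cases hfz : f z = 0
  · rw [hfz, norm_zero]
    have := Real.arctan_nonneg.2 (norm_nonneg z)
    have := Real.pi_pos
    positivity
  have hn : 0 < ‖f z‖ := norm_pos_iff.2 hfz
  have hre := hsl_harm (fun u => (f u).re) (Complex.reCLM.contDiff.comp_contDiffOn hf_smooth)
    hf_harm_re
  have him := hsl_harm (fun u => (f u).im) (Complex.imCLM.contDiff.comp_contDiffOn hf_smooth)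
    hf_harm_im
  have hsq : (f z).re ^ 2 + (f z).im ^ 2 = ‖f z‖ ^ 2 := by
    rw [← Complex.normSq_eq_norm_sq, Complex.normSq_apply]; ring
  set a := (f z).re / ‖f z‖ with ha
  set b := (f z).im / ‖f z‖ with hb
  have hab : a ^ 2 + b ^ 2 = 1 := by
    rw [ha, hb, div_pow, div_pow, ← add_div, hsq, div_self (by positivity)]
  have hu : InnerProductSpace.HarmonicOnNhd
      (a • (fun u => (f u).re) + b • (fun u => (f u).im)) (ball (0 : ℂ) 1) :=
    (hre.const_smul).add (him.const_smul)
  have h := hsl_real _ hu ?_ ?_ z hz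
  · refine le_trans (le_of_eq ?_) h
    simp only [Pi.add_apply, Pi.smul_apply, smul_eq_mul, ha, hb]
    field_simp
    linarith
  · intro w hw
    have h1 := mem_ball_zero_iff.1 (hf_range w hw)
    have h2 : (f w).re ^ 2 + (f w).im ^ 2 = ‖f w‖ ^ 2 := by
      rw [← Complex.normSq_eq_norm_sq, Complex.normSq_apply]; ring
    simp only [Pi.add_apply, Pi.smul_apply, smul_eq_mul]
    rw [← sq_lt_one_iff_abs_lt_one]
    have h3 : ‖f w‖ ^ 2 < 1 := by nlinarith [norm_nonneg (f w)]
    have h4 : (a * (f w).re + b * (f w).im) ^ 2 + (a * (f w).im - b * (f w).re) ^ 2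
        = (a ^ 2 + b ^ 2) * ((f w).re ^ 2 + (f w).im ^ 2) := by ring
    rw [hab, h2] at h4
    nlinarith [sq_nonneg (a * (f w).im - b * (f w).re)]
  · simp [hf0]
end

section
/- Let b : U → U be an analytic function of the open unit disk U = {z ∈ ℂ : |z| < 1} into itself, and define a(z) = (2i/π) · Log((1 + b(z))/(1 - b(z))), where Log denotes the principal branch of the complex logarithm (well-defined since (1+b(z))/(1-b(z)) has positive real part). Then a is an analytic map of U into the vertical strip S = {w ∈ ℂ : -1 < Re w < 1}, and for every z ∈ U, |a'(z)| ≤ (4/π) · (1 - (Re a(z))²)/(1 - |z|²). -/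
open Complex Metric Real

lemma den_ne {p q : ℂ} (hp : ‖p‖ < 1) (hq : ‖q‖ < 1) : 1 + (starRingEnd ℂ) p * q ≠ 0 := by
  intro h
  have h1 : (starRingEnd ℂ) p * q = -1 := by linear_combination h
  have h2 : ‖p‖ * ‖q‖ = 1 := by
    have := congrArg norm h1
    simpa using this
  nlinarith [norm_nonneg p, norm_nonneg q]

lemma mob_lt {p q : ℂ} (hp : ‖p‖ < 1) (hq : ‖q‖ < 1) :
    ‖(q + p) / (1 + (starRingEnd ℂ) p * q)‖ < 1 := by
  rw [norm_div, div_lt_one (norm_pos_iff.2 (den_ne hp hq))]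
  apply lt_of_pow_lt_pow_left₀ 2 (norm_nonneg _)
  have h1 : ‖p‖ ^ 2 < 1 := by nlinarith [norm_nonneg p]
  have h2 : ‖q‖ ^ 2 < 1 := by nlinarith [norm_nonneg q]
  have h3 : 0 < (1 - ‖p‖ ^ 2) * (1 - ‖q‖ ^ 2) := mul_pos (by linarith) (by linarith)
  rw [Complex.sq_norm, Complex.normSq_apply] at h3 h3
  rw [Complex.sq_norm, Complex.sq_norm, Complex.normSq_apply, Complex.normSq_apply]
  simp
  nlinarith

lemma mob_deriv {p q : ℂ} (hp : ‖p‖ < 1) (hq : ‖q‖ < 1) :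
    HasDerivAt (fun x : ℂ => (x + p) / (1 + (starRingEnd ℂ) p * x))
      ((1 - (starRingEnd ℂ) p * p) / (1 + (starRingEnd ℂ) p * q) ^ 2) q := by
  have h := ((hasDerivAt_id q).add_const p).div
    (((hasDerivAt_id q).const_mul ((starRingEnd ℂ) p)).const_add 1) (den_ne hp hq)
  refine h.congr_deriv ?_
  simp only [id]
  ring

lemma schwarz_pick (b : ℂ → ℂ)
    (hb_an : DifferentiableOn ℂ b (ball (0 : ℂ) 1))
    (hb_range : ∀ z ∈ ball (0 : ℂ) 1, b z ∈ ball (0 : ℂ) 1) (z : ℂ) (hz : ‖z‖ < 1) :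
    ‖deriv b z‖ * (1 - ‖z‖ ^ 2) ≤ 1 - ‖b z‖ ^ 2 := by
  have hbz : ‖b z‖ < 1 := by simpa using hb_range z (by simpa using hz)
  have hnb : ‖-b z‖ < 1 := by simpa using hbz
  let φ : ℂ → ℂ := fun x => (x + z) / (1 + (starRingEnd ℂ) z * x)
  let ψ : ℂ → ℂ := fun x => (x + -b z) / (1 + (starRingEnd ℂ) (-b z) * x)
  have hφ0 : φ 0 = z := by simp [φ]
  have hbd : ∀ x : ℂ, ‖x‖ < 1 → HasDerivAt b (deriv b x) x := fun x hx =>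
    (hb_an.differentiableAt (isOpen_ball.mem_nhds (by simpa using hx))).hasDerivAt
  have hφl : ∀ x : ℂ, ‖x‖ < 1 → ‖φ x‖ < 1 := fun x hx => mob_lt hz hx
  have hbl : ∀ x : ℂ, ‖x‖ < 1 → ‖b x‖ < 1 := fun x hx => by
    simpa using hb_range x (by simpa using hx)
  have hg : ∀ x : ℂ, ‖x‖ < 1 → HasDerivAt (ψ ∘ (b ∘ φ)) _ x := fun x hx =>
    HasDerivAt.comp x (mob_deriv hnb (hbl _ (hφl x hx)))
      (HasDerivAt.comp x (hbd _ (hφl x hx)) (mob_deriv hz hx))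
  have hd : DifferentiableOn ℂ (ψ ∘ (b ∘ φ)) (ball 0 1) := fun x hx =>
    (hg x (by simpa using hx)).differentiableAt.differentiableWithinAt
  have hm : Set.MapsTo (ψ ∘ (b ∘ φ)) (ball 0 1) (ball 0 1) := fun x hx => by
    have : ‖ψ (b (φ x))‖ < 1 := mob_lt hnb (hbl _ (hφl x (by simpa using hx)))
    simpa using this
  have h0 : (ψ ∘ (b ∘ φ)) 0 = 0 := by simp [ψ, hφ0]
  have key : ‖deriv (ψ ∘ (b ∘ φ)) 0‖ ≤ 1 / 1 :=
    norm_deriv_le_div_of_mapsTo_ball hd (by rw [h0]; exact hm.mono_right ball_subset_closedBall) one_pos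
  have e : ∀ w : ℂ, (starRingEnd ℂ) w * w = ((‖w‖ ^ 2 : ℝ) : ℂ) := fun w => by
    rw [Complex.conj_mul']; push_cast; rfl
  have e1 : ∀ w : ℂ, ‖w‖ < 1 → ‖(1 : ℂ) - (starRingEnd ℂ) w * w‖ = 1 - ‖w‖ ^ 2 := fun w hw => by
    rw [e, ← Complex.ofReal_one, ← Complex.ofReal_sub, Complex.norm_real, Real.norm_of_nonneg]
    nlinarith [norm_nonneg w]
  have hp : 0 < 1 - ‖b z‖ ^ 2 := by nlinarith [norm_nonneg (b z)]
  have hb2 : (starRingEnd ℂ) (-b z) * (-b z) = (starRingEnd ℂ) (b z) * (b z) := by simp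
  have hb3 : 1 + (starRingEnd ℂ) (-b z) * (b z) = 1 - (starRingEnd ℂ) (b z) * (b z) := by
    simp; ring
  rw [(hg 0 (by simp)).deriv] at key
  simp only [Function.comp, hφ0, hb2, hb3, norm_mul, norm_div, norm_pow, e1 z hz, e1 (b z) hbz] at key
  simp only [mul_zero, add_zero, norm_one, one_pow, div_one] at key
  have h5 : (1 - ‖b z‖ ^ 2) / (1 - ‖b z‖ ^ 2) ^ 2 = (1 - ‖b z‖ ^ 2)⁻¹ := by
    field_simp
  rw [h5, inv_mul_le_iff₀ hp] at key
  linarith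

lemma cos_bound_nonneg {t : ℝ} (h0 : 0 ≤ t) (h1 : t ≤ π / 2) : Real.cos t ≤ 1 - (2 / π * t) ^ 2 := by
  have hpi := Real.pi_pos
  have ha : 0 ≤ 1 - 2 / π * t := by
    rw [sub_nonneg, div_mul_eq_mul_div, div_le_one hpi]; linarith
  have hb : 0 ≤ 2 / π * t := by positivity
  have hx : (0 : ℝ) ∈ Set.Icc 0 π := ⟨le_rfl, hpi.le⟩
  have hy : π / 4 ∈ Set.Icc 0 π := ⟨by linarith, by linarith⟩
  have hcc := strictConcaveOn_sin_Icc.concaveOn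
  have hc := hcc.2 hx hy ha hb (by ring)
  simp only [smul_eq_mul, Real.sin_zero, mul_zero, zero_add, Real.sin_pi_div_four] at hc
  have e : 2 / π * t * (π / 4) = t / 2 := by field_simp; ring
  rw [e] at hc
  have h2 : Real.cos t = 1 - 2 * Real.sin (t / 2) ^ 2 := by
    rw [Real.sin_sq_eq_half_sub, show 2 * (t / 2) = t by ring]; ring
  have h3 : (2 / π * t * (√2 / 2)) ^ 2 ≤ Real.sin (t / 2) ^ 2 :=
    pow_le_pow_left₀ (by positivity) hc 2
  have h4 : (2 / π * t * (√2 / 2)) ^ 2 = (2 / π * t) ^ 2 / 2 := by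
    rw [mul_pow, div_pow, Real.sq_sqrt (by norm_num)]; ring
  rw [h2]; linarith

lemma cos_bound {t : ℝ} (h1 : |t| ≤ π / 2) : Real.cos t ≤ 1 - (2 / π * t) ^ 2 := by
  have := cos_bound_nonneg (abs_nonneg t) h1
  rwa [Real.cos_abs, mul_pow, sq_abs, ← mul_pow] at this



/-- The key step in the proof of Kalaj–Vuorinen, Theorem 1: if `b : U → U` is
analytic and `a(z) = (2i/π) Log((1 + b(z))/(1 - b(z)))`, then `a` is an analytic
map of the unit disk into the strip `{w : -1 < Re w < 1}` and
`|a'(z)| ≤ (4/π)(1 - (Re a(z))²)/(1 - |z|²)`. -/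
theorem strip_map_deriv_bound
    (b : ℂ → ℂ)
    (hb_an : DifferentiableOn ℂ b (ball (0 : ℂ) 1))
    (hb_range : ∀ z ∈ ball (0 : ℂ) 1, b z ∈ ball (0 : ℂ) 1)
    (a : ℂ → ℂ)
    (ha : ∀ z, a z = (2 * Complex.I / (π : ℂ)) * Complex.log ((1 + b z) / (1 - b z))) :
    (DifferentiableOn ℂ a (ball (0 : ℂ) 1)
      ∧ ∀ z ∈ ball (0 : ℂ) 1, -1 < (a z).re ∧ (a z).re < 1)
    ∧ ∀ z ∈ ball (0 : ℂ) 1,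
        ‖deriv a z‖ ≤ (4 / π) * (1 - (a z).re ^ 2) / (1 - ‖z‖ ^ 2) := by


  have hpi := Real.pi_pos
  have hne : ∀ z ∈ ball (0 : ℂ) 1, 1 - b z ≠ 0 ∧ 1 + b z ≠ 0 := fun z hz => by
    have h : ‖b z‖ < 1 := by simpa using hb_range z hz
    constructor
    · intro h'
      rw [show b z = 1 by linear_combination -h'] at h
      simp at h
    · intro h'
      rw [show b z = -1 by linear_combination h'] at h
      simp at h
  have hre : ∀ z ∈ ball (0 : ℂ) 1, ((1 + b z) / (1 - b z)).re =
      (1 - ‖b z‖ ^ 2) / ‖1 - b z‖ ^ 2 := fun z hz => by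
    rw [Complex.div_re, Complex.sq_norm, Complex.sq_norm, Complex.normSq_apply (b z), ← add_div]
    congr 1
    simp
    ring
  have hpos : ∀ z ∈ ball (0 : ℂ) 1, 0 < ((1 + b z) / (1 - b z)).re := fun z hz => by
    have h : ‖b z‖ < 1 := by simpa using hb_range z hz
    rw [hre z hz]
    have := norm_pos_iff.2 (hne z hz).1
    apply div_pos _ (by positivity)
    nlinarith [norm_nonneg (b z)]
  have har : ∀ z, (a z).re = -(2 / π * Complex.arg ((1 + b z) / (1 - b z))) := fun z => by
    rw [ha, show (2 * Complex.I / (π : ℂ)) = ((2 / π : ℝ) : ℂ) * Complex.I by push_cast; ring,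
      mul_assoc, Complex.re_ofReal_mul, Complex.I_mul_re, Complex.log_im]
    ring
  have hder : ∀ z ∈ ball (0 : ℂ) 1, HasDerivAt a
      ((2 * Complex.I / (π : ℂ)) * (2 * deriv b z / ((1 - b z) * (1 + b z)))) z := fun z hz => by
    have hbd := (hb_an.differentiableAt (isOpen_ball.mem_nhds hz)).hasDerivAt
    obtain ⟨n1, n2⟩ := hne z hz
    have h := (((hbd.const_add 1).div (hbd.const_sub 1) n1).clog
      (Or.inl (hpos z hz))).const_mul (2 * Complex.I / (π : ℂ))
    rw [show a = _ from funext ha]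
    refine h.congr_deriv ?_
    congr 1
    simp only [Pi.div_apply]
    field_simp
    ring
  refine ⟨⟨fun z hz => (hder z hz).differentiableAt.differentiableWithinAt, fun z hz => ?_⟩,
    fun z hz => ?_⟩
  · have h := Complex.abs_arg_lt_pi_div_two_iff.2 (Or.inl (hpos z hz))
    rw [abs_lt] at h
    rw [har]
    have e : 2 / π * (π / 2) = 1 := by field_simp
    have hp : 0 < 2 / π := by positivity
    constructor <;> nlinarith
  · have hz' : ‖z‖ < 1 := by simpa using hz
    have h := Complex.abs_arg_lt_pi_div_two_iff.2 (Or.inl (hpos z hz))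
    obtain ⟨n1, n2⟩ := hne z hz
    have p1 := norm_pos_iff.2 n1
    have p2 := norm_pos_iff.2 n2
    have hc := cos_bound h.le
    rw [Complex.cos_arg (div_ne_zero n2 n1), hre z hz, norm_div] at hc
    have hsp := schwarz_pick b hb_an hb_range z hz'
    have hzp : 0 < 1 - ‖z‖ ^ 2 := by nlinarith [norm_nonneg z]
    rw [(hder z hz).deriv, har, neg_sq, le_div_iff₀ hzp]
    simp only [norm_mul, norm_div, Complex.norm_I, Complex.norm_real, Real.norm_of_nonneg hpi.le,
      Complex.norm_ofNat]
    have e : (1 - ‖b z‖ ^ 2) / ‖1 - b z‖ ^ 2 / (‖1 + b z‖ / ‖1 - b z‖) =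
        (1 - ‖b z‖ ^ 2) / (‖1 - b z‖ * ‖1 + b z‖) := by field_simp
    rw [e] at hc
    calc _ = 4 / π * ((‖deriv b z‖ * (1 - ‖z‖ ^ 2)) / (‖1 - b z‖ * ‖1 + b z‖)) := by
          field_simp; ring
      _ ≤ 4 / π * ((1 - ‖b z‖ ^ 2) / (‖1 - b z‖ * ‖1 + b z‖)) := by gcongr
      _ ≤ _ := by gcongr
end

section
/- For every complex number b with |b| < 1, the following inequality holds: (1 - |b|²)/|1 - b²| ≤ 1 - (4/π²) · (arg((1 + b)/(1 - b)))², where arg denotes the principal argument (note that (1+b)/(1-b) has positive real part, so its principal argument lies in (-π/2, π/2)). -/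
open Complex Real

lemma cos_aux (t : ℝ) (h0 : 0 ≤ t) (h1 : t ≤ π / 2) :
    Real.cos t ≤ 1 - (4 / π ^ 2) * t ^ 2 := by
  have hpi := Real.pi_pos
  have hc0 : 0 ≤ 2 * t / π := by positivity
  have hc1 : 2 * t / π ≤ 1 := by rw [div_le_one hpi]; linarith
  have h := strictConcaveOn_sin_Icc.concaveOn.2
    (show (0 : ℝ) ∈ Set.Icc 0 π from ⟨le_rfl, hpi.le⟩)
    (show (π / 4 : ℝ) ∈ Set.Icc 0 π from ⟨by positivity, by linarith⟩)
    (sub_nonneg.2 hc1) hc0 (by ring)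
  have e : (2 * t / π) * (π / 4) = t / 2 := by field_simp; ring
  simp only [smul_eq_mul, mul_zero, zero_add, Real.sin_zero, Real.sin_pi_div_four, e] at h
  have h2 := pow_le_pow_left₀ (by positivity) h 2
  have e2 : (2 * t / π * (√2 / 2)) ^ 2 = (4 / π ^ 2) * t ^ 2 / 2 := by
    rw [mul_pow, div_pow (√2), Real.sq_sqrt (by norm_num)]; ring
  have e3 : Real.cos t = 1 - 2 * Real.sin (t / 2) ^ 2 := by
    have := Real.cos_two_mul (t / 2)
    have h3 := Real.sin_sq_add_cos_sq (t / 2)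
    rw [show 2 * (t / 2) = t by ring] at this
    linarith
  rw [e2] at h2
  linarith

/-- For `|b| < 1` one has `(1 - |b|²)/|1 - b²| ≤ 1 - (4/π²) (arg((1+b)/(1-b)))²`,
where the principal argument of `(1+b)/(1-b)` lies in `(-π/2, π/2)`. -/
theorem mobius_arg_inequality
    (b : ℂ) (hb : ‖b‖ < 1) :
    (1 - ‖b‖ ^ 2) / ‖1 - b ^ 2‖
      ≤ 1 - (4 / π ^ 2) * (Complex.arg ((1 + b) / (1 - b))) ^ 2 := by
  have n1 : 1 - b ≠ 0 := by
    intro h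
    rw [← sub_eq_zero.1 h] at hb
    simp at hb
  have n2 : 1 + b ≠ 0 := by
    intro h
    rw [← neg_eq_of_add_eq_zero_right h] at hb
    simp at hb
  have p1 : 0 < ‖1 - b‖ := norm_pos_iff.2 n1
  have p2 : 0 < ‖1 + b‖ := norm_pos_iff.2 n2
  have hre : ((1 + b) / (1 - b)).re = (1 - ‖b‖ ^ 2) / ‖1 - b‖ ^ 2 := by
    rw [Complex.div_re, ← Complex.normSq_eq_norm_sq, ← Complex.normSq_eq_norm_sq, ← add_div]
    congr 1
    simp [Complex.normSq_apply]
    ring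
  have hre0 : 0 ≤ ((1 + b) / (1 - b)).re := by
    rw [hre]
    have : ‖b‖ ^ 2 ≤ 1 := pow_le_one₀ (norm_nonneg _) hb.le
    exact div_nonneg (by linarith) (by positivity)
  have hcos := Complex.cos_arg (div_ne_zero n2 n1)
  have key : (1 - ‖b‖ ^ 2) / ‖1 - b ^ 2‖ = Real.cos (Complex.arg ((1 + b) / (1 - b))) := by
    rw [hcos, hre, norm_div, show 1 - b ^ 2 = (1 + b) * (1 - b) by ring, norm_mul]
    field_simp
  rw [key, ← Real.cos_abs, ← sq_abs (Complex.arg _)]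
  exact cos_aux _ (abs_nonneg _) (Complex.abs_arg_le_pi_div_two_iff.2 hre0)
end

section
/- Define f : U → ℝ on the open unit disk U = {(x,y) ∈ ℝ² : x² + y² < 1} by f(x, y) = (2/π) · arctan(2y / (1 - x² - y²)). Then f is harmonic on U, maps U into the open interval (-1, 1), satisfies f(0) = 0, and its gradient at the origin satisfies |∇f(0)| = 4/π; in particular equality holds in the bound |∇f(0)| ≤ (4/π)·(1 - f(0)²)/(1 - 0²). -/
open Complex Metric Real

lemma ball_pos' {z : ℂ} (hz : z ∈ ball (0 : ℂ) 1) : 0 < 1 - z.re ^ 2 - z.im ^ 2 := by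
  have h : ‖z‖ < 1 := by simpa using hz
  have h2 := Complex.sq_norm z
  rw [Complex.normSq_apply] at h2
  nlinarith [norm_nonneg z]

lemma hre (z : ℂ) : HasFDerivAt (fun w : ℂ => w.re) Complex.reCLM z := Complex.reCLM.hasFDerivAt
lemma him (z : ℂ) : HasFDerivAt (fun w : ℂ => w.im) Complex.imCLM z := Complex.imCLM.hasFDerivAt

lemma hN (z : ℂ) : HasFDerivAt (fun w : ℂ => (1 - w.re ^ 2 - w.im ^ 2) ^ 2 + 4 * w.im ^ 2)
    ((-4 * z.re * (1 - z.re ^ 2 - z.im ^ 2)) • Complex.reCLM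
      + (-4 * z.im * (1 - z.re ^ 2 - z.im ^ 2) + 8 * z.im) • Complex.imCLM) z := by
  have h := (((((hre z).pow 2).const_sub 1).sub ((him z).pow 2)).pow 2).add
    (((him z).pow 2).const_mul 4)
  refine h.congr_fderiv ?_
  ext
  simp
  ring

lemma hf1 (f : ℂ → ℝ)
    (hf : ∀ z, f z = (2 / π) * Real.arctan (2 * z.im / (1 - z.re ^ 2 - z.im ^ 2)))
    {z : ℂ} (hz : z ∈ ball (0 : ℂ) 1) :
    HasFDerivAt f
      (((4 / π) * (2 * z.re * z.im * ((1 - z.re ^ 2 - z.im ^ 2) ^ 2 + 4 * z.im ^ 2)⁻¹)) • Complex.reCLM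
      + ((4 / π) * ((1 - z.re ^ 2 + z.im ^ 2) * ((1 - z.re ^ 2 - z.im ^ 2) ^ 2 + 4 * z.im ^ 2)⁻¹))
        • Complex.imCLM) z := by
  have hD := ball_pos' hz
  have hD0 := hD.ne'
  have hN0 : (1 - z.re ^ 2 - z.im ^ 2) ^ 2 + 4 * z.im ^ 2 ≠ 0 := by positivity
  have hfe : f = fun z => (2 / π) * Real.arctan (2 * z.im * (1 - z.re ^ 2 - z.im ^ 2)⁻¹) := by
    funext z; rw [hf, div_eq_mul_inv (2 * z.im)]
  rw [hfe]
  have hd := (((hre z).pow 2).const_sub 1).sub ((him z).pow 2)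
  have hi := (hasDerivAt_inv hD0).comp_hasFDerivAt z hd
  have h := ((((him z).const_mul 2).mul hi).arctan).const_mul (2 / π)
  refine h.congr_fderiv ?_
  have hp : π ≠ 0 := Real.pi_ne_zero
  have hq : 1 + (2 * z.im * (1 - z.re ^ 2 - z.im ^ 2)⁻¹) ^ 2
      = ((1 - z.re ^ 2 - z.im ^ 2) ^ 2 + 4 * z.im ^ 2) / (1 - z.re ^ 2 - z.im ^ 2) ^ 2 := by
    field_simp; ring
  ext
  · simp [hq]
    field_simp
    try ring

theorem extremal_harmonic_function :
    ∀ f : ℂ → ℝ,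
      (∀ z, f z = (2 / π) * Real.arctan (2 * z.im / (1 - z.re ^ 2 - z.im ^ 2))) →
      ContDiffOn ℝ 2 f (ball (0 : ℂ) 1)
      ∧ (∀ z ∈ ball (0 : ℂ) 1,
          fderiv ℝ (fun w => fderiv ℝ f w 1) z 1
            + fderiv ℝ (fun w => fderiv ℝ f w Complex.I) z Complex.I = 0)
      ∧ (∀ z ∈ ball (0 : ℂ) 1, f z ∈ Set.Ioo (-1 : ℝ) 1)
      ∧ f 0 = 0
      ∧ ‖gradient f 0‖ = 4 / π
      ∧ ‖gradient f 0‖ = (4 / π) * (1 - (f 0) ^ 2) / (1 - ‖(0 : ℂ)‖ ^ 2) := by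
  intro f hf
  have hf0 : f 0 = 0 := by simp [hf]
  have hg : ‖gradient f 0‖ = 4 / π := by
    have h0 := (hf1 f hf (z := 0) (by simp)).fderiv
    have : gradient f 0 = ((4 / π : ℝ) : ℂ) * Complex.I := by
      rw [gradient, h0, LinearIsometryEquiv.symm_apply_eq]
      ext
      simp [Complex.inner, mul_comm]
    rw [this, norm_mul, Complex.norm_I, mul_one, Complex.norm_real, Real.norm_of_nonneg]
    positivity
  refine ⟨?_, ?_, ?_, hf0, hg, ?_⟩
  · have hfe : f = fun z => (2 / π) * Real.arctan (2 * z.im / (1 - z.re ^ 2 - z.im ^ 2)) :=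
      funext hf
    have h1 : ContDiff ℝ 2 (fun z : ℂ => z.re) := Complex.reCLM.contDiff
    have h2 : ContDiff ℝ 2 (fun z : ℂ => z.im) := Complex.imCLM.contDiff
    rw [hfe]
    refine contDiffOn_const.mul (Real.contDiff_arctan.comp_contDiffOn ?_)
    refine ContDiffOn.div (contDiff_const.mul h2).contDiffOn
      ((contDiff_const.sub (h1.pow 2)).sub (h2.pow 2)).contDiffOn ?_
    intro z hz
    exact (ball_pos' hz).ne'
  · intro z hz
    have hD := ball_pos' hz
    have hN0 : (1 - z.re ^ 2 - z.im ^ 2) ^ 2 + 4 * z.im ^ 2 ≠ 0 := by positivity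
    have hi := (hasDerivAt_inv hN0).comp_hasFDerivAt z (hN z)
    have hA := (((((hre z).const_mul 2).mul (him z))).mul hi).const_mul (4 / π)
    have hB := (((((hre z).pow 2).const_sub 1).add ((him z).pow 2)).mul hi).const_mul (4 / π)
    have hA' := hA.congr_of_eventuallyEq (f₁ := fun w => fderiv ℝ f w 1) (by
      filter_upwards [isOpen_ball.mem_nhds hz] with w hw
      rw [(hf1 f hf hw).fderiv]
      simp)
    have hB' := hB.congr_of_eventuallyEq (f₁ := fun w => fderiv ℝ f w Complex.I) (by
      filter_upwards [isOpen_ball.mem_nhds hz] with w hw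
      rw [(hf1 f hf hw).fderiv]
      simp)
    rw [hA'.fderiv, hB'.fderiv]
    have hp : π ≠ 0 := Real.pi_ne_zero
    simp
    field_simp
    ring
  · intro z _
    rw [hf]
    have hp := Real.pi_pos
    have h1 := Real.arctan_lt_pi_div_two (2 * z.im / (1 - z.re ^ 2 - z.im ^ 2))
    have h2 := Real.neg_pi_div_two_lt_arctan (2 * z.im / (1 - z.re ^ 2 - z.im ^ 2))
    constructor
    · rw [div_mul_eq_mul_div, lt_div_iff₀ hp]; linarith
    · rw [div_mul_eq_mul_div, div_lt_iff₀ hp]; linarith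
  · rw [hg, hf0]; simp
end

section
/- Let f be an analytic (holomorphic) function of the open unit disk U = {z ∈ ℂ : |z| < 1} into the open unit ball Bₙ = {w ∈ ℂⁿ : |w| < 1} of ℂⁿ. Then at every point z ∈ U where the function z ↦ |f(z)| is differentiable, |∇|f|(z)| ≤ (1 - |f(z)|²)/(1 - |z|²). -/
open Complex Metric Real

lemma mob_aux {a w : ℂ} (ha : ‖a‖ < 1) (hw : ‖w‖ < 1) :
    1 + (starRingEnd ℂ) a * w ≠ 0 ∧ ‖(w + a) / (1 + (starRingEnd ℂ) a * w)‖ < 1 := by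
  have h0 : 1 + (starRingEnd ℂ) a * w ≠ 0 := by
    intro h
    have h1 : (starRingEnd ℂ) a * w = -1 := by linear_combination h
    have h2 : ‖a‖ * ‖w‖ = 1 := by
      have := congrArg norm h1
      simpa using this
    nlinarith [norm_nonneg a, norm_nonneg w]
  refine ⟨h0, ?_⟩
  rw [norm_div, div_lt_one (norm_pos_iff.2 h0)]
  apply lt_of_pow_lt_pow_left₀ 2 (norm_nonneg _)
  have ha2 : ‖a‖ ^ 2 < 1 := by nlinarith [norm_nonneg a]
  have hw2 : ‖w‖ ^ 2 < 1 := by nlinarith [norm_nonneg w]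
  rw [← Complex.normSq_eq_norm_sq, Complex.normSq_apply] at *
  rw [← Complex.normSq_eq_norm_sq, Complex.normSq_apply] at *
  simp
  nlinarith

lemma schwarz_pick_aux {g : ℂ → ℂ} (hg : DifferentiableOn ℂ g (ball 0 1))
    (hr : ∀ z ∈ ball (0 : ℂ) 1, ‖g z‖ < 1) {z : ℂ} (hz : ‖z‖ < 1) :
    ‖deriv g z‖ ≤ (1 - ‖g z‖ ^ 2) / (1 - ‖z‖ ^ 2) := by
  have hzb : z ∈ ball (0 : ℂ) 1 := by simpa using hz
  have haz := hr z hzb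
  have haz' : ‖-g z‖ < 1 := by simpa using haz
  have hp1 : 0 < 1 - ‖z‖ ^ 2 := by nlinarith [norm_nonneg z]
  have hp2 : 0 < 1 - ‖g z‖ ^ 2 := by nlinarith [norm_nonneg (g z)]
  have hmob : ∀ a : ℂ, ‖a‖ < 1 → ∀ w : ℂ, ‖w‖ < 1 →
      HasDerivAt (fun w => (w + a) / (1 + (starRingEnd ℂ) a * w))
        ((1 - (starRingEnd ℂ) a * a) / (1 + (starRingEnd ℂ) a * w) ^ 2) w := by
    intro a ha w hw
    have h0 := (mob_aux ha hw).1
    have h1 : HasDerivAt (fun w : ℂ => w + a) 1 w := (hasDerivAt_id w).add_const a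
    have h2 : HasDerivAt (fun w : ℂ => 1 + (starRingEnd ℂ) a * w) ((starRingEnd ℂ) a) w := by
      simpa using ((hasDerivAt_id w).const_mul ((starRingEnd ℂ) a)).const_add 1
    refine (h1.div h2 h0).congr_deriv ?_
    congr 1
    ring
  have hF : ∀ w : ℂ, ‖w‖ < 1 → HasDerivAt (fun w => (fun w => (w + -g z) / (1 + (starRingEnd ℂ) (-g z) * w))
      (g ((w + z) / (1 + (starRingEnd ℂ) z * w)))) _ w := fun w hw => by
    have hm := (mob_aux hz hw).2
    have hmb : (w + z) / (1 + (starRingEnd ℂ) z * w) ∈ ball (0 : ℂ) 1 := by simpa using hm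
    have hd := ((hg.differentiableAt (isOpen_ball.mem_nhds hmb)).hasDerivAt).comp w (hmob z hz w hw)
    exact (hmob (-g z) haz' _ (hr _ hmb)).comp w hd
  have key := Complex.norm_deriv_le_one_of_mapsTo_ball (c := 0) (R := 1) (f := fun w => (fun w => (w + -g z) / (1 + (starRingEnd ℂ) (-g z) * w))
      (g ((w + z) / (1 + (starRingEnd ℂ) z * w))))
      (fun w hw => (hF w (by simpa using hw)).differentiableAt.differentiableWithinAt) (by
        intro w hw
        have hw' : ‖w‖ < 1 := by simpa using hw
        have hmb : (w + z) / (1 + (starRingEnd ℂ) z * w) ∈ ball (0 : ℂ) 1 := by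
          simpa using (mob_aux hz hw').2
        have := (mob_aux haz' (hr _ hmb)).2
        simpa using this.le) one_pos
  rw [(hF 0 (by simp)).deriv] at key
  have e1 : ∀ a : ℂ, (starRingEnd ℂ) a * a = ((‖a‖ ^ 2 : ℝ) : ℂ) := by
    intro a; rw [Complex.conj_mul']; push_cast; rfl
  have e2 : ∀ r : ℝ, (1 : ℂ) - (r : ℂ) = ((1 - r : ℝ) : ℂ) := by intro r; push_cast; rfl
  have e3 : (1 : ℂ) + (starRingEnd ℂ) (-g z) * g z = ((1 - ‖g z‖ ^ 2 : ℝ) : ℂ) := by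
    rw [map_neg, neg_mul, e1, ← e2]; ring
  simp only [zero_add, mul_zero, add_zero, div_one, one_pow] at key
  rw [e3, e1, e1, e2, e2, norm_neg] at key
  simp only [norm_mul, norm_div, norm_pow, Complex.norm_real, Real.norm_eq_abs, abs_of_pos hp1, abs_of_pos hp2] at key
  rw [le_div_iff₀ hp1]
  have : (1 - ‖g z‖ ^ 2) / (1 - ‖g z‖ ^ 2) ^ 2 * (‖deriv g z‖ * (1 - ‖z‖ ^ 2)) = (‖deriv g z‖ * (1 - ‖z‖ ^ 2)) / (1 - ‖g z‖ ^ 2) := by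
    field_simp
  rw [this, div_le_one hp2] at key
  exact key

/-- **Pavlović's Schwarz lemma for the norm of a holomorphic map** (Pavlović,
Theorem 1.1). If `f` is an analytic map of the unit disk into the unit ball of
`ℂⁿ`, then wherever `z ↦ |f(z)|` is differentiable,
`|∇|f|(z)| ≤ (1 - |f(z)|²)/(1 - |z|²)`. -/
theorem grad_norm_bound_analytic_map
    (n : ℕ) (f : ℂ → EuclideanSpace ℂ (Fin n))
    (hf_an : DifferentiableOn ℂ f (ball (0 : ℂ) 1))
    (hf_range : ∀ z ∈ ball (0 : ℂ) 1, ‖f z‖ < 1) :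
    ∀ z ∈ ball (0 : ℂ) 1, DifferentiableAt ℝ (fun w => ‖f w‖) z →
      ‖gradient (fun w => ‖f w‖) z‖ ≤ (1 - ‖f z‖ ^ 2) / (1 - ‖z‖ ^ 2) := by
  intro z hz hd
  set u : EuclideanSpace ℂ (Fin n) := ((‖f z‖⁻¹ : ℝ) : ℂ) • f z with hu
  have hu1 : ‖u‖ ≤ 1 := by
    rw [hu, norm_smul, Complex.norm_real, norm_inv, norm_norm]
    exact inv_mul_le_one
  let L : EuclideanSpace ℂ (Fin n) →L[ℂ] ℂ := innerSL ℂ u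
  have hL : ∀ x, ‖L x‖ ≤ ‖x‖ := fun x =>
    (norm_inner_le_norm u x).trans (mul_le_of_le_one_left (norm_nonneg _) hu1)
  have hLz : L (f z) = (‖f z‖ : ℂ) := by
    change inner ℂ u (f z) = _
    rw [hu, inner_smul_left, inner_self_eq_norm_sq_to_K, Complex.conj_ofReal]
    by_cases h : ‖f z‖ = 0
    · simp [h]
    · have : (‖f z‖ : ℂ) ≠ 0 := by exact_mod_cast h
      simp only [Complex.ofReal_inv, Complex.coe_algebraMap]
      field_simp
  have hg : DifferentiableOn ℂ (fun w => L (f w)) (ball 0 1) :=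
    L.differentiable.comp_differentiableOn hf_an
  have hz' : ‖z‖ < 1 := by simpa using hz
  have sp := schwarz_pick_aux hg (fun w hw => (hL _).trans_lt (hf_range w hw)) hz'
  have hgz := (hg.differentiableAt (isOpen_ball.mem_nhds hz)).hasDerivAt
  have hre := Complex.reCLM.hasFDerivAt.comp z (hgz.hasFDerivAt.restrictScalars ℝ)
  have hmin : IsLocalMin (fun w => ‖f w‖ - (L (f w)).re) z := by
    refine Filter.Eventually.of_forall fun w => ?_
    simp only [hLz, Complex.ofReal_re, sub_self]
    exact sub_nonneg.2 ((Complex.re_le_norm _).trans (hL _))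
  have h0 := hmin.hasFDerivAt_eq_zero (hd.hasFDerivAt.sub hre)
  rw [sub_eq_zero] at h0
  have hn : ‖gradient (fun w => ‖f w‖) z‖ = ‖fderiv ℝ (fun w => ‖f w‖) z‖ := by
    simp [gradient]
  have hfz : ‖L (f z)‖ = ‖f z‖ := by rw [hLz]; simp
  simp only [hfz] at sp
  refine le_trans ?_ sp
  rw [hn, h0]
  refine ContinuousLinearMap.opNorm_le_bound _ (norm_nonneg _) fun x => ?_
  refine (Complex.abs_re_le_norm _).trans ?_
  simp [mul_comm]
end
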